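/- Let G be a countable discrete amenable group acting continuously on a compact metric space (X,d) and let {F_n} be a tempered Følner sequence in G with lim_{n→∞} |F_n|/log n = ∞. Then h_top(X,G) ≤ h^B_top(X,{F_n}). -/

import Mathlib

open Filter Set MeasureTheory Topology ENNReal Pointwise

variable {G X : Type*}

section Defs

variable [Group G] [MetricSpace X] [MulAction G X]

/-- The Bowen ball `B_F(x,ε) = {y : d(gx,gy) < ε for all g ∈ F}`. -/
def bowenBall (F : Finset G) (x : X) (ε : ℝ) : Set X :=
  {y : X | ∀ g ∈ F, dist (g • x) (g • y) < ε}

/-- A Følner sequence: `|F_n ∆ gF_n|/|F_n| → 0` for every `g ∈ G`. -/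
def IsFolnerSeq (F : ℕ → Finset G) : Prop :=
  ∀ g : G, Tendsto
    (fun n => ((symmDiff (F n : Set G) ((g * ·) '' (F n : Set G))).ncard : ℝ) / (F n).card)
    atTop (𝓝 0)

/-- A tempered sequence: `|⋃_{k<n} F_k⁻¹ F_n| ≤ C |F_n|` for all `n`. -/
def IsTemperedSeq (F : ℕ → Finset G) : Prop :=
  ∃ C : ℝ, 0 < C ∧ ∀ n : ℕ,
    ((⋃ k ∈ Finset.range n, ((F k : Set G)⁻¹ * (F n : Set G))).ncard : ℝ) ≤ C * (F n).card

/-- The growth condition `lim_n |F_n| / log n = ∞`. -/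
def GrowthCond (F : ℕ → Finset G) : Prop :=
  Tendsto (fun n : ℕ => ((F n).card : ℝ) / Real.log n) atTop atTop

/-- `M(Z,N,ε,s,{F_n})`: infimum of `∑ exp(-s |F_{n_i}|)` over countable families of Bowen
balls `B_{F_{n_i}}(x_i,ε)`, `n_i ≥ N`, covering `Z`. -/
noncomputable def ballM (F : ℕ → Finset G) (Z : Set X) (N : ℕ) (ε s : ℝ) : ℝ≥0∞ :=
  ⨅ (I : Set (X × ℕ)) (_ : I.Countable) (_ : ∀ p ∈ I, N ≤ p.2)
    (_ : Z ⊆ ⋃ p ∈ I, bowenBall (F p.2) p.1 ε),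
    ∑' p : I, ENNReal.ofReal (Real.exp (-s * ((F (p : X × ℕ).2).card : ℝ)))

/-- `M(Z,ε,s,{F_n}) = lim_{N→∞} M(Z,N,ε,s,{F_n})` (the quantity is nondecreasing in `N`). -/
noncomputable def ballMN (F : ℕ → Finset G) (Z : Set X) (ε s : ℝ) : ℝ≥0∞ :=
  ⨆ N : ℕ, ballM F Z N ε s

/-- `M(Z,s,{F_n}) = lim_{ε→0} M(Z,ε,s,{F_n})` (the quantity is nondecreasing as `ε` decreases). -/
noncomputable def ballMtot (F : ℕ → Finset G) (Z : Set X) (s : ℝ) : ℝ≥0∞ :=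
  ⨆ (ε : ℝ) (_ : 0 < ε), ballMN F Z ε s

/-- The Bowen topological entropy of `Z` along `{F_n}`: the critical value of `s` at which
`M(Z,s,{F_n})` jumps from `+∞` to `0`, i.e. `inf {s : M(Z,s,{F_n}) = 0}`. -/
noncomputable def bowenEnt (F : ℕ → Finset G) (Z : Set X) : ℝ≥0∞ :=
  ⨅ (s : ℝ) (_ : ballMtot F Z s = 0), ENNReal.ofReal s

/-- The weighted quantity `W(f,N,ε,s,{F_n})`. -/
noncomputable def wtW (F : ℕ → Finset G) (f : X → ℝ≥0∞) (N : ℕ) (ε s : ℝ) : ℝ≥0∞ :=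
  ⨅ (I : Set (X × ℕ)) (c : X × ℕ → ℝ≥0∞) (_ : I.Countable)
    (_ : ∀ p ∈ I, N ≤ p.2 ∧ 0 < c p ∧ c p < ⊤)
    (_ : ∀ x : X, f x ≤ ∑' p : I, c (p : X × ℕ) *
        (bowenBall (F (p : X × ℕ).2) (p : X × ℕ).1 ε).indicator (fun _ => (1 : ℝ≥0∞)) x),
    ∑' p : I, c (p : X × ℕ) * ENNReal.ofReal (Real.exp (-s * ((F (p : X × ℕ).2).card : ℝ)))

/-- `W(Z,N,ε,s,{F_n}) = W(χ_Z,N,ε,s,{F_n})`. -/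
noncomputable def wtWset (F : ℕ → Finset G) (Z : Set X) (N : ℕ) (ε s : ℝ) : ℝ≥0∞ :=
  wtW F (Z.indicator fun _ => (1 : ℝ≥0∞)) N ε s

/-- `W(Z,ε,s,{F_n}) = lim_{N→∞} W(Z,N,ε,s,{F_n})`. -/
noncomputable def wtWN (F : ℕ → Finset G) (Z : Set X) (ε s : ℝ) : ℝ≥0∞ :=
  ⨆ N : ℕ, wtWset F Z N ε s

/-- `W(Z,s,{F_n}) = lim_{ε→0} W(Z,ε,s,{F_n})`. -/
noncomputable def wtWtot (F : ℕ → Finset G) (Z : Set X) (s : ℝ) : ℝ≥0∞ :=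
  ⨆ (ε : ℝ) (_ : 0 < ε), wtWN F Z ε s

/-- The weighted Bowen topological entropy of `Z` along `{F_n}`. -/
noncomputable def wtBowenEnt (F : ℕ → Finset G) (Z : Set X) : ℝ≥0∞ :=
  ⨅ (s : ℝ) (_ : wtWtot F Z s = 0), ENNReal.ofReal s

/-- A finite open cover of `X`. -/
def IsFinOpenCover (𝒰 : Finset (Set X)) : Prop :=
  (∀ U ∈ 𝒰, IsOpen U) ∧ ⋃₀ (𝒰 : Set (Set X)) = Set.univ

/-- `N(⋁_{g∈F} g⁻¹𝒰)`: the minimal cardinality of a subcover of the refined cover, whose members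
are the sets `X(𝐔) = ⋂_{g∈F} g⁻¹ U_g` with `U_g ∈ 𝒰`. -/
noncomputable def coverNum (𝒰 : Finset (Set X)) (F : Finset G) : ℕ :=
  sInf {k : ℕ | ∃ Λ : Finset (G → Set X), Λ.card = k ∧
    (∀ u ∈ Λ, ∀ g ∈ F, u g ∈ 𝒰) ∧
    (⋃ u ∈ Λ, ⋂ g ∈ F, (fun y => g • y) ⁻¹' u g) = Set.univ}

/-- `h_top(G,𝒰) = lim_n (1/|F_n|) log N(⋁_{g∈F_n} g⁻¹𝒰)` (the limit exists by Ornstein–Weiss,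
hence equals the `limsup`). -/
noncomputable def coverTopEnt (F : ℕ → Finset G) (𝒰 : Finset (Set X)) : ℝ :=
  limsup (fun n => Real.log (coverNum 𝒰 (F n)) / (F n).card) atTop

/-- The topological entropy `h_top(X,G)`, the supremum over finite open covers. -/
noncomputable def topEnt (X : Type*) [MetricSpace X] [MulAction G X] (F : ℕ → Finset G) : ℝ≥0∞ :=
  ⨆ (𝒰 : Finset (Set X)) (_ : IsFinOpenCover 𝒰), ENNReal.ofReal (coverTopEnt F 𝒰)

/-- `M(Z,𝒰,N,s,{F_n})`: infimum of `∑_{𝐔∈Λ} exp(-s m(𝐔))` over collections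
`Λ ⊆ ⋃_{j≥N} 𝒲_{F_j}(𝒰)` covering `Z`; an element `𝐔 ∈ 𝒲_{F_j}(𝒰)` is encoded as a pair
`(j, u)` with `u g ∈ 𝒰` for `g ∈ F_j` (and `u g = ∅` elsewhere), `X(𝐔) = ⋂_{g∈F_j} g⁻¹ (u g)`
and `m(𝐔) = |F_j|`. -/
noncomputable def covM (F : ℕ → Finset G) (𝒰 : Finset (Set X)) (Z : Set X) (N : ℕ) (s : ℝ) :
    ℝ≥0∞ :=
  ⨅ (Λ : Set (ℕ × (G → Set X)))
    (_ : ∀ p ∈ Λ, N ≤ p.1 ∧ (∀ g ∈ F p.1, p.2 g ∈ 𝒰) ∧ (∀ g ∉ F p.1, p.2 g = ∅))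
    (_ : Z ⊆ ⋃ p ∈ Λ, ⋂ g ∈ F p.1, (fun y => g • y) ⁻¹' p.2 g),
    ∑' p : Λ, ENNReal.ofReal (Real.exp (-s * ((F (p : ℕ × (G → Set X)).1).card : ℝ)))

/-- `M(Z,𝒰,s,{F_n}) = lim_{N→∞} M(Z,𝒰,N,s,{F_n})`. -/
noncomputable def covMtot (F : ℕ → Finset G) (𝒰 : Finset (Set X)) (Z : Set X) (s : ℝ) : ℝ≥0∞ :=
  ⨆ N : ℕ, covM F 𝒰 Z N s

/-- The cover-based Bowen topological entropy `h^B_top(𝒰,Z,{F_n}) = inf {s : M(Z,𝒰,s,{F_n}) = 0}`. -/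
noncomputable def covBowenEnt (F : ℕ → Finset G) (𝒰 : Finset (Set X)) (Z : Set X) : ℝ≥0∞ :=
  ⨅ (s : ℝ) (_ : covMtot F 𝒰 Z s = 0), ENNReal.ofReal s

/-- `diam(𝒰) = max {diam U : U ∈ 𝒰}`. -/
noncomputable def coverDiam (𝒰 : Finset (Set X)) : ℝ≥0∞ :=
  ⨆ U ∈ 𝒰, EMetric.diam U

end Defs

section MeasureDefs

variable [Group G] [MetricSpace X] [MulAction G X] [MeasurableSpace X]

/-- The quantity `-(1/m) log μ(B)`, with value `+∞` when `μ B = 0`. -/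
noncomputable def locTerm (μ : Measure X) (B : Set X) (m : ℕ) : ℝ≥0∞ :=
  if μ B = 0 then ⊤ else ENNReal.ofReal (-(Real.log ((μ B).toReal)) / (m : ℝ))

/-- The lower local entropy `h̲_μ^{loc}(x,ε,{F_n}) = liminf_n -(1/|F_n|) log μ(B_{F_n}(x,ε))`. -/
noncomputable def lowLoc (μ : Measure X) (F : ℕ → Finset G) (x : X) (ε : ℝ) : ℝ≥0∞ :=
  liminf (fun n => locTerm μ (bowenBall (F n) x ε) (F n).card) atTop

/-- The upper local entropy `limsup_n -(1/|F_n|) log μ(B_{F_n}(x,ε))`. -/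
noncomputable def upLoc (μ : Measure X) (F : ℕ → Finset G) (x : X) (ε : ℝ) : ℝ≥0∞ :=
  limsup (fun n => locTerm μ (bowenBall (F n) x ε) (F n).card) atTop

/-- `h̲_μ^{loc}(x,{F_n}) = lim_{ε→0} h̲_μ^{loc}(x,ε,{F_n})` (a monotone limit, i.e. the
supremum over `ε > 0`). -/
noncomputable def lowLocPt (μ : Measure X) (F : ℕ → Finset G) (x : X) : ℝ≥0∞ :=
  ⨆ (ε : ℝ) (_ : 0 < ε), lowLoc μ F x ε

/-- `h̲_μ^{loc}({F_n}) = ∫_X h̲_μ^{loc}(x,{F_n}) dμ(x)`. -/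
noncomputable def lowLocEnt (μ : Measure X) (F : ℕ → Finset G) : ℝ≥0∞ :=
  ∫⁻ x, lowLocPt μ F x ∂μ

/-- A finite measurable partition of `X`, presented as `P : Fin k → Set X`. -/
def IsMeasPartition {k : ℕ} (P : Fin k → Set X) : Prop :=
  (∀ i, MeasurableSet (P i)) ∧ Pairwise (Function.onFun Disjoint P) ∧ (⋃ i, P i) = Set.univ

/-- The static entropy `H_μ(𝒫_F)` of the join `𝒫_F = ⋁_{g∈F} g⁻¹𝒫`; its atoms are the
nonempty sets `⋂_{g∈F} g⁻¹ P(u g)` (distinct choices `u` yield disjoint atoms, and empty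
atoms contribute `0`). -/
noncomputable def partH (μ : Measure X) {k : ℕ} (P : Fin k → Set X) (F : Finset G) : ℝ :=
  letI := Classical.decEq G
  ∑ u : (↥F → Fin k),
    Real.negMulLog ((μ (⋂ g : ↥F, (fun y => (g : G) • y) ⁻¹' P (u g))).toReal)

/-- `h_μ(G,𝒫) = liminf_n (1/|F_n|) H_μ(𝒫_{F_n})`. -/
noncomputable def partEnt (μ : Measure X) (F : ℕ → Finset G) {k : ℕ} (P : Fin k → Set X) : ℝ :=
  liminf (fun n => partH μ P (F n) / (F n).card) atTop

/-- The measure-theoretic entropy `h_μ(X,G) = sup_𝒫 h_μ(G,𝒫)` (it is independent of the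
Følner sequence used to compute it). -/
noncomputable def measEnt (μ : Measure X) (F : ℕ → Finset G) : ℝ≥0∞ :=
  ⨆ (k : ℕ) (P : Fin k → Set X) (_ : IsMeasPartition P), ENNReal.ofReal (partEnt μ F P)

/-- Ergodicity of the `G`-action w.r.t. `μ`. -/
def IsErgodicGAction (G : Type*) [Group G] [MulAction G X] (μ : Measure X) : Prop :=
  ∀ A : Set X, MeasurableSet A → (∀ g : G, (g • ·) ⁻¹' A = A) → μ A = 0 ∨ μ A = 1

end MeasureDefs

section Helpers

open scoped Classical

/-- The right translate `F_n c`. -/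
noncomputable def tile [Group G] (F : ℕ → Finset G) (n : ℕ) (c : G) : Finset G :=
  (F n).image (fun h => h * c)

lemma card_tile [Group G] (F : ℕ → Finset G) (n : ℕ) (c : G) :
    (tile F n c).card = (F n).card :=
  Finset.card_image_of_injective _ (mul_left_injective c)

lemma mem_tile [Group G] (F : ℕ → Finset G) (n : ℕ) (c g : G) :
    g ∈ tile F n c ↔ ∃ h ∈ F n, h * c = g := by
  simp only [tile, Finset.mem_image]

/-- Single shape: a maximal almost disjoint subfamily covers a definite portion. -/
lemma exists_max [Group G] (F : ℕ → Finset G) (a : ℝ) (ha : 0 < a) (ha1 : a < 1) (m : ℕ)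
    (hm : 0 < (F m).card) (R : Finset G) :
    ∃ S ⊆ R, a * ((S.card : ℝ) * (F m).card) ≤ ((S.biUnion (tile F m)).card : ℝ) ∧
      (1 - a) * R.card ≤ ((S.biUnion (tile F m)).card : ℝ) := by
  let P : Finset (Finset G) := R.powerset.filter
    (fun S => a * ((S.card : ℝ) * (F m).card) ≤ ((S.biUnion (tile F m)).card : ℝ))
  have hP : P.Nonempty := ⟨∅, by simp [P]⟩
  obtain ⟨S, hS, hmax⟩ := P.exists_max_image (fun S => S.card) hP
  have hS' := hS
  simp only [P, Finset.mem_filter, Finset.mem_powerset] at hS'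
  obtain ⟨hSR, hSa⟩ := hS'
  refine ⟨S, hSR, hSa, ?_⟩
  set V := S.biUnion (tile F m) with hV
  have hmR : (0 : ℝ) < (F m).card := by exact_mod_cast hm
  have key : ∀ c ∈ R, (1 - a) * (F m).card ≤ ((tile F m c ∩ V).card : ℝ) := by
    intro c hc
    by_cases hcS : c ∈ S
    · have : tile F m c ∩ V = tile F m c :=
        Finset.inter_eq_left.2 (Finset.subset_biUnion_of_mem (tile F m) hcS)
      rw [this, card_tile]
      nlinarith
    · by_contra hlt
      push Not at hlt
      have hins : insert c S ∈ P := by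
        simp only [P, Finset.mem_filter, Finset.mem_powerset]
        refine ⟨Finset.insert_subset hc hSR, ?_⟩
        rw [Finset.card_insert_of_notMem hcS, Finset.biUnion_insert, ← hV]
        have h1 := Finset.card_union_add_card_inter (tile F m c) V
        rw [card_tile] at h1
        have h2 : ((tile F m c ∪ V).card : ℝ) + ((tile F m c ∩ V).card : ℝ)
          = (F m).card + V.card := by exact_mod_cast h1
        push_cast
        linarith
      have := hmax _ hins
      rw [Finset.card_insert_of_notMem hcS] at this
      omega
  have hsum : ∑ c ∈ R, (tile F m c ∩ V).card ≤ V.card * (F m).card := by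
    have : ∀ c, (tile F m c ∩ V).card = ∑ v ∈ V, if v ∈ tile F m c then 1 else 0 := by
      intro c
      rw [Finset.sum_boole, Finset.inter_comm, Finset.filter_mem_eq_inter]
      simp
    simp_rw [this]
    rw [Finset.sum_comm, ← smul_eq_mul]
    refine Finset.sum_le_card_nsmul _ _ _ ?_
    intro v _
    rw [Finset.sum_boole]
    have : (R.filter (fun c => v ∈ tile F m c)).card ≤ ((F m).image (fun h => h⁻¹ * v)).card := by
      apply Finset.card_le_card
      intro c hc
      simp only [Finset.mem_filter, mem_tile] at hc
      obtain ⟨_, h, hh, rfl⟩ := hc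
      exact Finset.mem_image.2 ⟨h, hh, by simp⟩
    simpa using this.trans Finset.card_image_le
  have h3 : (R.card : ℝ) * ((1 - a) * (F m).card) ≤ (V.card : ℝ) * (F m).card := by
    calc (R.card : ℝ) * ((1 - a) * (F m).card) ≤ ∑ c ∈ R, ((tile F m c ∩ V).card : ℝ) := by
          rw [← nsmul_eq_mul]; exact Finset.card_nsmul_le_sum _ _ _ key
      _ ≤ _ := by exact_mod_cast hsum
  have h4 : ((1 - a) * R.card) * (F m).card ≤ (V.card : ℝ) * (F m).card := by linarith
  exact le_of_mul_le_mul_right h4 hmR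

/-- Counting centres whose tiles touch a union of tiles. -/
lemma card_touch_le [Group G] (F : ℕ → Finset G) {ι : Type*} (S : Finset ι)
    (ctr : ι → G) (sh : ι → ℕ) (B : ℕ → Finset G) (b : ℝ)
    (hB : ∀ i ∈ S, ((B (sh i)).card : ℝ) ≤ b * (F (sh i)).card) (T : Finset G)
    (hT : ∀ c ∈ T, ∃ i ∈ S, c * (ctr i)⁻¹ ∈ B (sh i)) :
    (T.card : ℝ) ≤ b * ∑ i ∈ S, ((F (sh i)).card : ℝ) := by
  have h1 : T ⊆ S.biUnion (fun i => (B (sh i)).image (fun h => h * ctr i)) := by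
    intro c hc
    obtain ⟨i, hi, h⟩ := hT c hc
    exact Finset.mem_biUnion.2 ⟨i, hi, Finset.mem_image.2 ⟨_, h, by simp⟩⟩
  have h2 : T.card ≤ ∑ i ∈ S, (B (sh i)).card :=
    (Finset.card_le_card h1).trans (Finset.card_biUnion_le.trans
      (Finset.sum_le_sum fun i _ => Finset.card_image_le))
  calc (T.card : ℝ) ≤ ∑ i ∈ S, ((B (sh i)).card : ℝ) := by exact_mod_cast h2
    _ ≤ ∑ i ∈ S, b * ((F (sh i)).card : ℝ) := Finset.sum_le_sum hB
    _ = _ := by rw [Finset.mul_sum]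

/-- Vitali-type covering lemma for tempered sequences. -/
lemma vitali [Group G] (F : ℕ → Finset G) (D a : ℝ) (hD : 0 < D) (ha : 0 < a) (ha1 : a < 1)
    (hT : ∀ n : ℕ,
    ((⋃ k ∈ Finset.range n, ((F k : Set G)⁻¹ * (F n : Set G))).ncard : ℝ) ≤ D * (F n).card)
    (nn : G → ℕ) : ∀ (k : ℕ) (R : Finset G), R.card ≤ k → (∀ c ∈ R, 0 < (F (nn c)).card) →
      ∃ S ⊆ R, a * ∑ c ∈ S, ((F (nn c)).card : ℝ) ≤
          ((S.biUnion fun c => tile F (nn c) c).card : ℝ) ∧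
        (R.card : ℝ) ≤ (1 / (1 - a) + D / a) * ((S.biUnion fun c => tile F (nn c) c).card : ℝ) := by
  intro k
  induction k with
  | zero =>
    intro R hR _
    refine ⟨∅, by simp, by simp, ?_⟩
    have : R.card = 0 := by omega
    simp [this]
  | succ k ih =>
    intro R hR hpos
    rcases R.eq_empty_or_nonempty with rfl | hne
    · exact ⟨∅, by simp, by simp, by simp⟩
    obtain ⟨c₀, hc₀, hmax⟩ := R.exists_max_image nn hne
    set m := nn c₀ with hm
    obtain ⟨S, hSR, hSa, hSc⟩ := exists_max F a ha ha1 m (hpos c₀ hc₀) (R.filter fun c => nn c = m)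
    set V := S.biUnion (tile F m) with hV
    have hSm : ∀ c ∈ S, nn c = m := fun c hc => (Finset.mem_filter.1 (hSR hc)).2
    let R₁ := R.filter fun c => nn c ≠ m ∧ ¬ Disjoint (tile F (nn c) c) V
    let R₂ := R.filter fun c => nn c ≠ m ∧ Disjoint (tile F (nn c) c) V
    have hcard : R.card = (R.filter fun c => nn c = m).card + R₁.card + R₂.card := by
      rw [← Finset.card_filter_add_card_filter_not (s := R) (fun c => nn c = m), add_assoc]
      congr 1
      rw [← Finset.card_filter_add_card_filter_not (s := R.filter fun c => ¬ nn c = m)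
        (fun c => ¬ Disjoint (tile F (nn c) c) V)]
      simp only [R₁, R₂, Finset.filter_filter, not_not, ne_eq]
    have hlt : R₂.card ≤ k := by
      have : 0 < (R.filter fun c => nn c = m).card :=
        Finset.card_pos.2 ⟨c₀, Finset.mem_filter.2 ⟨hc₀, rfl⟩⟩
      omega
    obtain ⟨S₂, hS₂R, hS₂a, hS₂c⟩ := ih R₂ hlt (fun c hc => hpos c (Finset.mem_filter.1 hc).1)
    have hfin : ∀ n, (⋃ k ∈ Finset.range n, ((F k : Set G)⁻¹ * (F n : Set G))).Finite := by
      intro n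
      refine Set.Finite.biUnion (Finset.finite_toSet _) fun k _ => ?_
      exact ((F k).finite_toSet.inv).mul (F n).finite_toSet
    have hR₁ : (R₁.card : ℝ) ≤ D * ∑ i ∈ S, ((F (nn i)).card : ℝ) := by
      refine card_touch_le F S id nn (fun n => (hfin n).toFinset) D ?_ R₁ ?_
      · intro i _
        rw [← Set.ncard_eq_toFinset_card _ (hfin _)]
        exact hT _
      · intro c hc
        obtain ⟨hcR, hcm, hd⟩ := Finset.mem_filter.1 hc
        rw [Finset.not_disjoint_iff] at hd
        obtain ⟨g, hg1, hg2⟩ := hd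
        obtain ⟨i, hi, hg3⟩ := Finset.mem_biUnion.1 hg2
        obtain ⟨h, hh, rfl⟩ := (mem_tile _ _ _ _).1 hg1
        obtain ⟨h', hh', he⟩ := (mem_tile _ _ _ _).1 hg3
        refine ⟨i, hi, ?_⟩
        have hlt : nn c < m := lt_of_le_of_ne (hmax c hcR) hcm
        simp only [Set.Finite.mem_toFinset, Set.mem_iUnion, Finset.mem_range, id]
        refine ⟨nn c, by rw [hSm i hi]; exact hlt, ?_⟩
        refine Set.mem_mul.2 ⟨h⁻¹, by simpa using hh, h', by rw [hSm i hi]; exact hh', ?_⟩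
        have : h' = h * c * i⁻¹ := by rw [← he]; simp
        rw [this]; group
    have hsumS : ∑ i ∈ S, ((F (nn i)).card : ℝ) = S.card * (F m).card := by
      rw [Finset.sum_congr rfl (fun c hc => by rw [hSm c hc]), Finset.sum_const, nsmul_eq_mul]
    have hVeq : (S.biUnion fun c => tile F (nn c) c) = V :=
      Finset.biUnion_congr rfl fun c hc => by rw [hSm c hc]
    have hdisj : Disjoint V (S₂.biUnion fun c => tile F (nn c) c) := by
      rw [Finset.disjoint_biUnion_right]
      intro c hc
      exact (Finset.mem_filter.1 (hS₂R hc)).2.2.symm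
    have hSS : Disjoint S S₂ := by
      rw [Finset.disjoint_left]
      intro c h1 h2
      exact (Finset.mem_filter.1 (hS₂R h2)).2.1 (hSm c h1)
    refine ⟨S ∪ S₂, Finset.union_subset (hSR.trans (Finset.filter_subset _ _))
      (hS₂R.trans (Finset.filter_subset _ _)), ?_, ?_⟩
    · rw [Finset.union_biUnion, hVeq, Finset.card_union_of_disjoint hdisj,
        Finset.sum_union hSS, hsumS]
      push_cast
      linarith
    · rw [Finset.union_biUnion, hVeq, Finset.card_union_of_disjoint hdisj, hcard]
      push_cast
      rw [hsumS] at hR₁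
      have e1 : ((R.filter fun c => nn c = m).card : ℝ) ≤ 1 / (1 - a) * V.card := by
        rw [div_mul_eq_mul_div, one_mul, le_div_iff₀ (by linarith)]
        linarith
      have e2 : D * ((S.card : ℝ) * (F m).card) ≤ D / a * V.card := by
        rw [div_mul_eq_mul_div, le_div_iff₀ ha]
        nlinarith
      linarith

/-- Union of all the tiles of a family. -/
noncomputable def tun [Group G] (F : ℕ → Finset G) (C : Finset (G × (X × ℕ))) : Finset G :=
  C.biUnion fun p => tile F p.2.2 p.1

/-- Almost invariance. -/
lemma folner_ev [Group G] (F : ℕ → Finset G) (hF : IsFolnerSeq F) (K : Finset G) (η : ℝ)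
    (hη : 0 < η) : ∀ᶠ n in atTop, (((K * F n) \ F n).card : ℝ) ≤ η * (F n).card := by
  have h1 : ∀ᶠ n in atTop, ∀ g ∈ K,
      ((symmDiff (F n : Set G) ((g * ·) '' (F n : Set G))).ncard : ℝ) / (F n).card
        < η / (K.card + 1) := by
    rw [Filter.eventually_all_finset]
    intro g _
    exact (hF g).eventually_lt_const (by positivity)
  filter_upwards [h1] with n hn
  rcases (F n).eq_empty_or_nonempty with h0 | hne
  · simp [h0]
  have hpos : (0 : ℝ) < (F n).card := by exact_mod_cast hne.card_pos
  have h2 : ((K * F n) \ F n) ⊆ K.biUnion (fun g => ((F n).image (g * ·)) \ F n) := by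
    intro x hx
    obtain ⟨hx1, hx2⟩ := Finset.mem_sdiff.1 hx
    obtain ⟨g, hg, f, hf, rfl⟩ := Finset.mem_mul.1 hx1
    exact Finset.mem_biUnion.2 ⟨g, hg, Finset.mem_sdiff.2 ⟨Finset.mem_image_of_mem _ hf, hx2⟩⟩
  have h3 : ∀ g ∈ K, ((((F n).image (g * ·)) \ F n).card : ℝ) ≤ η / (K.card + 1) * (F n).card := by
    intro g hg
    have := (div_lt_iff₀ hpos).1 (hn g hg)
    refine le_trans ?_ this.le
    rw [← Set.ncard_coe_finset]
    refine Nat.cast_le.2 (Set.ncard_le_ncard ?_ ?_)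
    · intro x hx
      rw [Set.mem_symmDiff]
      right
      simpa using hx
    · exact ((F n).finite_toSet.union ((F n).finite_toSet.image _)).subset
        (Set.symmDiff_subset_union)
  calc (((K * F n) \ F n).card : ℝ) ≤ ∑ g ∈ K, ((((F n).image (g * ·)) \ F n).card : ℝ) := by
        exact_mod_cast (Finset.card_le_card h2).trans Finset.card_biUnion_le
    _ ≤ K.card * (η / (K.card + 1) * (F n).card) := by
        rw [← nsmul_eq_mul]; exact Finset.sum_le_card_nsmul _ _ _ h3
    _ ≤ η * (F n).card := by
        have : (K.card : ℝ) * (η / (K.card + 1)) ≤ η := by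
          rw [mul_div_assoc', div_le_iff₀ (by positivity)]
          nlinarith
        nlinarith

/-- Finite families of Bowen balls whose translates almost cover, up to the fraction `θ`. -/
def Good [Group G] [MetricSpace X] [MulAction G X] (F : ℕ → Finset G) (ε s a θ : ℝ) : Prop :=
  ∀ δ : ℝ, 0 < δ → ∃ I : Finset (X × ℕ),
    ∑ p ∈ I, Real.exp (-s * ((F p.2).card : ℝ)) ≤ δ ∧
    ∀ (x : X) (R : Finset G), ∃ C : Finset (G × (X × ℕ)),
      (∀ p ∈ C, p.1 ∈ R ∧ p.2 ∈ I ∧ p.1 • x ∈ bowenBall (F p.2.2) p.2.1 ε) ∧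
      a * ∑ p ∈ C, ((F p.2.2).card : ℝ) ≤ ((tun F C).card : ℝ) ∧
      (1 - θ) * R.card ≤ ((tun F C).card : ℝ)

lemma good_one [Group G] [MetricSpace X] [MulAction G X] (F : ℕ → Finset G) (ε s a : ℝ) :
    Good (X := X) F ε s a 1 := by
  intro δ hδ
  refine ⟨∅, by simpa using hδ.le, fun x R => ⟨∅, by simp, by simp, by simp⟩⟩

lemma good_step [Group G] [MetricSpace X] [MulAction G X] (F : ℕ → Finset G)
    (hFol : IsFolnerSeq F) (D a : ℝ) (hD : 0 < D) (ha : 0 < a) (ha1 : a < 1)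
    (hT : ∀ n : ℕ,
    ((⋃ k ∈ Finset.range n, ((F k : Set G)⁻¹ * (F n : Set G))).ncard : ℝ) ≤ D * (F n).card)
    (hpos : ∀ᶠ n in atTop, 0 < (F n).card) (ε s : ℝ)
    (hcov : ∀ (N : ℕ) (δ : ℝ), 0 < δ → ∃ I : Finset (X × ℕ), (∀ p ∈ I, N ≤ p.2) ∧
      (∀ x : X, ∃ p ∈ I, x ∈ bowenBall (F p.2) p.1 ε) ∧
      ∑ p ∈ I, Real.exp (-s * ((F p.2).card : ℝ)) ≤ δ)
    (θ : ℝ) (hθ : 0 < θ) (hθ1 : θ ≤ 1) (hg : Good (X := X) F ε s a θ) :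
    Good (X := X) F ε s a (θ * (1 - 1 / (2 * (1 / (1 - a) + D / a)))) := by
  set κ := 1 / (1 - a) + D / a with hκ
  have h1a : 0 < 1 - a := by linarith
  have hκ0 : 0 < κ := by positivity
  intro δ hδ
  obtain ⟨I₀, hI₀s, hI₀⟩ := hg (δ / 2) (by positivity)
  let K : Finset G := (I₀.biUnion fun i => F i.2)⁻¹
  have hη : 0 < a * θ / 2 := by positivity
  obtain ⟨N, hN⟩ := eventually_atTop.1 ((folner_ev F hFol K _ hη).and hpos)
  obtain ⟨I₁, hI₁N, hI₁c, hI₁s⟩ := hcov N (δ / 2) (by positivity)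
  refine ⟨I₁ ∪ I₀, ?_, ?_⟩
  · have := Finset.sum_union_inter (s₁ := I₁) (s₂ := I₀)
      (f := fun p : X × ℕ => Real.exp (-s * ((F p.2).card : ℝ)))
    have h0 : 0 ≤ ∑ p ∈ I₁ ∩ I₀, Real.exp (-s * ((F p.2).card : ℝ)) :=
      Finset.sum_nonneg fun _ _ => (Real.exp_pos _).le
    linarith
  intro x R
  choose q hqI hqx using fun c : G => hI₁c (c • x)
  obtain ⟨S, hSR, hSa, hSc⟩ := vitali F D a hD ha ha1 hT (fun c => (q c).2) R.card R le_rfl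
    (fun c _ => (hN _ (hI₁N _ (hqI c))).2)
  set U := S.biUnion fun c => tile F (q c).2 c with hU
  let Q : G → Prop := fun c => ∀ i ∈ I₀, Disjoint (tile F i.2 c) U
  let A := R.filter fun c => c ∉ U ∧ Q c
  let B := R.filter fun c => c ∉ U ∧ ¬ Q c
  have hRc : R.card ≤ U.card + B.card + A.card := by
    have : R ⊆ (U ∪ B) ∪ A := by
      intro c hc
      simp only [A, B, Finset.mem_union, Finset.mem_filter]
      tauto
    refine (Finset.card_le_card this).trans ((Finset.card_union_le _ _).trans ?_)
    exact Nat.add_le_add_right (Finset.card_union_le _ _) _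
  have hB : (B.card : ℝ) ≤ (a * θ / 2) * ∑ c ∈ S, ((F (q c).2).card : ℝ) := by
    refine card_touch_le F S id (fun c => (q c).2) (fun n => (K * F n) \ F n) _ ?_ B ?_
    · intro c _
      exact (hN _ (hI₁N _ (hqI c))).1
    · intro c hc
      obtain ⟨hcR, hcU, hQ⟩ := Finset.mem_filter.1 hc
      simp only [Q, not_forall, Finset.not_disjoint_iff] at hQ
      obtain ⟨i, hi, g, hg1, hg2⟩ := hQ
      obtain ⟨j, hj, hg3⟩ := Finset.mem_biUnion.1 hg2
      obtain ⟨h, hh, rfl⟩ := (mem_tile _ _ _ _).1 hg1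
      obtain ⟨h', hh', he⟩ := (mem_tile _ _ _ _).1 hg3
      refine ⟨j, hj, Finset.mem_sdiff.2 ⟨?_, ?_⟩⟩
      · refine Finset.mem_mul.2 ⟨h⁻¹, ?_, h', hh', ?_⟩
        · exact Finset.inv_mem_inv (Finset.mem_biUnion.2 ⟨i, hi, hh⟩)
        · have : h' = h * c * j⁻¹ := by rw [← he]; simp
          rw [this]; simp only [id]; group
      · intro hmem
        exact hcU (Finset.mem_biUnion.2 ⟨j, hj, (mem_tile _ _ _ _).2 ⟨_, hmem, by simp⟩⟩)
  obtain ⟨C₀, hC₀, hC₀a, hC₀c⟩ := hI₀ x A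
  let C₁ : Finset (G × (X × ℕ)) := S.image fun c => (c, q c)
  have hC₁U : tun F C₁ = U := by
    simp only [tun, C₁, Finset.image_biUnion, hU]
  have hC₁s : ∑ p ∈ C₁, ((F p.2.2).card : ℝ) = ∑ c ∈ S, ((F (q c).2).card : ℝ) := by
    simp only [C₁]
    rw [Finset.sum_image]
    intro c _ c' _ h
    exact congrArg Prod.fst h
  have hun : tun F (C₁ ∪ C₀) = U ∪ tun F C₀ := by
    rw [← hC₁U]
    simp only [tun, Finset.union_biUnion]
  have hdisj : Disjoint U (tun F C₀) := by
    simp only [tun]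
    rw [Finset.disjoint_biUnion_right]
    intro p hp
    obtain ⟨hpA, hpI, _⟩ := hC₀ p hp
    exact ((Finset.mem_filter.1 hpA).2.2 _ hpI).symm
  refine ⟨C₁ ∪ C₀, ?_, ?_, ?_⟩
  · intro p hp
    rcases Finset.mem_union.1 hp with hp | hp
    · obtain ⟨c, hc, rfl⟩ := Finset.mem_image.1 hp
      exact ⟨hSR hc, Finset.mem_union_left _ (hqI c), hqx c⟩
    · obtain ⟨hpA, hpI, hpx⟩ := hC₀ p hp
      exact ⟨(Finset.mem_filter.1 hpA).1, Finset.mem_union_right _ hpI, hpx⟩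
  · rw [hun, Finset.card_union_of_disjoint hdisj]
    have := Finset.sum_union_inter (s₁ := C₁) (s₂ := C₀)
      (f := fun p : G × (X × ℕ) => ((F p.2.2).card : ℝ))
    have h0 : 0 ≤ ∑ p ∈ C₁ ∩ C₀, ((F p.2.2).card : ℝ) :=
      Finset.sum_nonneg fun _ _ => Nat.cast_nonneg _
    have h1 : ∑ p ∈ C₁ ∪ C₀, ((F p.2.2).card : ℝ) ≤
      ∑ c ∈ S, ((F (q c).2).card : ℝ) + ∑ p ∈ C₀, ((F p.2.2).card : ℝ) := by linarith
    push_cast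
    nlinarith
  · rw [hun, Finset.card_union_of_disjoint hdisj]
    have hRc' : (R.card : ℝ) ≤ U.card + B.card + A.card := by exact_mod_cast hRc
    have hB' : (B.card : ℝ) ≤ θ / 2 * U.card := by nlinarith
    have hA : (1 - θ) * (R.card - U.card - θ / 2 * U.card) ≤ (1 - θ) * (A.card : ℝ) :=
      mul_le_mul_of_nonneg_left (by linarith) (by linarith)
    have hu : (R.card : ℝ) / κ ≤ U.card := by
      rw [div_le_iff₀ hκ0]; linarith
    have hu0 : (0 : ℝ) ≤ U.card := Nat.cast_nonneg _
    push_cast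
    have e : (1 - θ * (1 - 1 / (2 * κ))) * (R.card : ℝ) =
        (1 - θ) * R.card + θ / 2 * (R.card / κ) := by
      field_simp
      ring
    rw [e]
    have h5 : θ / 2 * (R.card / κ) ≤ θ / 2 * U.card :=
      mul_le_mul_of_nonneg_left hu (by positivity)
    have h6 : 0 ≤ θ * θ * (U.card : ℝ) := by positivity
    nlinarith

lemma good_all [Group G] [MetricSpace X] [MulAction G X] (F : ℕ → Finset G)
    (hFol : IsFolnerSeq F) (hTemp : IsTemperedSeq F) (a : ℝ) (ha : 0 < a) (ha1 : a < 1)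
    (hpos : ∀ᶠ n in atTop, 0 < (F n).card) (ε s : ℝ)
    (hcov : ∀ (N : ℕ) (δ : ℝ), 0 < δ → ∃ I : Finset (X × ℕ), (∀ p ∈ I, N ≤ p.2) ∧
      (∀ x : X, ∃ p ∈ I, x ∈ bowenBall (F p.2) p.1 ε) ∧
      ∑ p ∈ I, Real.exp (-s * ((F p.2).card : ℝ)) ≤ δ)
    (θ₀ : ℝ) (hθ₀ : 0 < θ₀) : ∃ θ, θ < θ₀ ∧ Good (X := X) F ε s a θ := by
  obtain ⟨D, hD, hT⟩ := hTemp
  set r := 1 - 1 / (2 * (1 / (1 - a) + D / a)) with hr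
  have h1a : 0 < 1 - a := by linarith
  have hκ : 1 < 1 / (1 - a) + D / a := by
    have : 1 < 1 / (1 - a) := by rw [lt_div_iff₀ h1a]; linarith
    have : 0 < D / a := by positivity
    linarith
  have hr1 : r < 1 := by
    have : 0 < 1 / (2 * (1 / (1 - a) + D / a)) := by positivity
    linarith
  have hr0 : 0 < r := by
    have : 1 / (2 * (1 / (1 - a) + D / a)) < 1 := by
      rw [div_lt_one (by positivity)]; linarith
    linarith
  have hall : ∀ k : ℕ, Good (X := X) F ε s a (r ^ k) := by
    intro k
    induction k with
    | zero => simpa using good_one F ε s a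
    | succ k ih =>
      rw [pow_succ]
      exact good_step F hFol D a hD ha ha1 hT hpos ε s hcov _ (by positivity)
        (pow_le_one₀ hr0.le hr1.le) ih
  obtain ⟨k, hk⟩ := exists_pow_lt_of_lt_one hθ₀ hr1
  exact ⟨_, hk, hall k⟩

lemma count_le {α : Type*} (Ω : Finset α) (w : α → ℝ) (s B : ℝ) (hs : 0 ≤ s)
    (V : Finset (Finset α)) (hV : ∀ C ∈ V, C ⊆ Ω ∧ ∑ p ∈ C, w p ≤ B) :
    (V.card : ℝ) ≤ Real.exp (s * B + ∑ p ∈ Ω, Real.exp (-s * w p)) := by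
  have h1 : ∀ C ∈ V, Real.exp (-(s * B)) ≤ ∏ p ∈ C, Real.exp (-s * w p) := by
    intro C hC
    rw [← Real.exp_sum, ← Finset.mul_sum]
    apply Real.exp_le_exp.2
    have := mul_le_mul_of_nonneg_left (hV C hC).2 hs
    linarith
  have h2 : (V.card : ℝ) * Real.exp (-(s * B)) ≤ Real.exp (∑ p ∈ Ω, Real.exp (-s * w p)) := by
    calc (V.card : ℝ) * Real.exp (-(s * B)) ≤ ∑ C ∈ V, ∏ p ∈ C, Real.exp (-s * w p) := by
          rw [← nsmul_eq_mul]; exact Finset.card_nsmul_le_sum _ _ _ h1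
      _ ≤ ∑ C ∈ Ω.powerset, ∏ p ∈ C, Real.exp (-s * w p) := by
          refine Finset.sum_le_sum_of_subset_of_nonneg ?_ ?_
          · intro C hC
            exact Finset.mem_powerset.2 (hV C hC).1
          · intro C _ _
            exact Finset.prod_nonneg fun _ _ => (Real.exp_pos _).le
      _ = ∏ p ∈ Ω, (1 + Real.exp (-s * w p)) := (Finset.prod_one_add _).symm
      _ ≤ ∏ p ∈ Ω, Real.exp (Real.exp (-s * w p)) := by
          refine Finset.prod_le_prod (fun _ _ => by positivity) fun p _ => ?_
          rw [add_comm]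
          exact Real.add_one_le_exp _
      _ = _ := (Real.exp_sum _ _).symm
  rw [Real.exp_add]
  have h3 : (V.card : ℝ) = Real.exp (s * B) * (V.card * Real.exp (-(s * B))) := by
    rw [mul_left_comm, ← Real.exp_add]; simp
  rw [h3]
  exact mul_le_mul_of_nonneg_left h2 (Real.exp_pos _).le

lemma log_coverNum_le [Group G] [MetricSpace X] [MulAction G X] (F : ℕ → Finset G)
    (𝒰 : Finset (Set X)) (h𝒰 : IsFinOpenCover 𝒰) (hne : 0 < 𝒰.card)
    (ε s a θ η δ : ℝ) (hs : 0 ≤ s) (ha : 0 < a)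
    (leb : X → Set X) (hleb : ∀ x, leb x ∈ 𝒰 ∧ Metric.ball x ε ⊆ leb x)
    (I : Finset (X × ℕ))
    (hIs : ∑ p ∈ I, Real.exp (-s * ((F p.2).card : ℝ)) ≤ δ)
    (E : Finset G)
    (hE : ((((I.biUnion fun i => F i.2) * E) \ E).card : ℝ) ≤ η * E.card)
    (hI : ∀ (x : X), ∃ C : Finset (G × (X × ℕ)),
      (∀ p ∈ C, p.1 ∈ E ∧ p.2 ∈ I ∧ p.1 • x ∈ bowenBall (F p.2.2) p.2.1 ε) ∧
      a * ∑ p ∈ C, ((F p.2.2).card : ℝ) ≤ ((tun F C).card : ℝ) ∧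
      (1 - θ) * E.card ≤ ((tun F C).card : ℝ)) (hδ : 0 ≤ δ) (hη : 0 ≤ η) (hθη : 0 ≤ η + θ) :
    Real.log (coverNum 𝒰 E) ≤
      (s * (1 + η) / a + δ + (η + θ) * Real.log 𝒰.card) * E.card := by
  set k : ℕ := ⌊(η + θ) * E.card⌋₊ with hk
  set B : ℝ := (1 + η) / a * E.card with hB
  let V : Finset (Finset (G × (X × ℕ))) := (E ×ˢ I).powerset.filter
    (fun C => ∑ p ∈ C, ((F p.2.2).card : ℝ) ≤ B ∧ (E \ tun F C).card ≤ k)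
  have hEx : ∀ (C : Finset (G × (X × ℕ))) (g : G), ∃ W ∈ 𝒰, g ∈ tun F C →
      ∃ p ∈ C, ∃ h ∈ F p.2.2, h * p.1 = g ∧ W = leb (h • p.2.1) := by
    intro C g
    by_cases hg : g ∈ tun F C
    · obtain ⟨p, hp, hgp⟩ := Finset.mem_biUnion.1 hg
      obtain ⟨h, hh, he⟩ := (mem_tile _ _ _ _).1 hgp
      exact ⟨_, (hleb (h • p.2.1)).1, fun _ => ⟨p, hp, h, hh, he, rfl⟩⟩
    · obtain ⟨W, hW⟩ := Finset.card_pos.1 hne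
      exact ⟨W, hW, fun h => absurd h hg⟩
  choose w hw𝒰 hw using hEx
  have hEy : ∀ y : X, ∃ W ∈ 𝒰, y ∈ W := by
    intro y
    have : y ∈ ⋃₀ (𝒰 : Set (Set X)) := by rw [h𝒰.2]; trivial
    obtain ⟨W, hW, hy⟩ := this
    exact ⟨W, hW, hy⟩
  choose cv hcv𝒰 hcv using hEy
  let mk : (C : Finset (G × (X × ℕ))) → ((g : G) → g ∈ E \ tun F C → Set X) → G → Set X :=
    fun C v g => if h : g ∈ E \ tun F C then v g h else w C g
  let Λ : Finset (G → Set X) :=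
    V.biUnion fun C => (Finset.pi (E \ tun F C) (fun _ => 𝒰)).image (mk C)
  -- the union of tiles is not much bigger than `E`
  have hsub : ∀ C : Finset (G × (X × ℕ)), C ⊆ E ×ˢ I →
      tun F C ⊆ E ∪ (((I.biUnion fun i => F i.2) * E) \ E) := by
    intro C hC g hg
    obtain ⟨p, hp, hgp⟩ := Finset.mem_biUnion.1 hg
    obtain ⟨h, hh, rfl⟩ := (mem_tile _ _ _ _).1 hgp
    obtain ⟨h1, h2⟩ := Finset.mem_product.1 (hC hp)
    by_cases hE' : h * p.1 ∈ E
    · exact Finset.mem_union_left _ hE'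
    · exact Finset.mem_union_right _ (Finset.mem_sdiff.2
        ⟨Finset.mul_mem_mul (Finset.mem_biUnion.2 ⟨p.2, h2, hh⟩) h1, hE'⟩)
  have hbig : ((E ∪ (((I.biUnion fun i => F i.2) * E) \ E)).card : ℝ) ≤ (1 + η) * E.card := by
    have : ((E ∪ (((I.biUnion fun i => F i.2) * E) \ E)).card : ℝ) ≤
      E.card + (((I.biUnion fun i => F i.2) * E) \ E).card := by
      exact_mod_cast Finset.card_union_le _ _
    linarith
  have hΛ𝒰 : ∀ u ∈ Λ, ∀ g ∈ E, u g ∈ 𝒰 := by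
    intro u hu g _
    obtain ⟨C, hC, hu⟩ := Finset.mem_biUnion.1 hu
    obtain ⟨v, hv, rfl⟩ := Finset.mem_image.1 hu
    simp only [mk]
    split_ifs with h
    · exact (Finset.mem_pi.1 hv) g h
    · exact hw𝒰 _ _
  have hΛcov : (⋃ u ∈ Λ, ⋂ g ∈ E, (fun y => g • y) ⁻¹' u g) = Set.univ := by
    rw [Set.eq_univ_iff_forall]
    intro x
    obtain ⟨C, hC, hCa, hCc⟩ := hI x
    have hCsub : C ⊆ E ×ˢ I := fun p hp => Finset.mem_product.2 ⟨(hC p hp).1, (hC p hp).2.1⟩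
    have hT1 : ((tun F C).card : ℝ) ≤ (1 + η) * E.card :=
      le_trans (by exact_mod_cast Finset.card_le_card (hsub C hCsub)) hbig
    have hCV : C ∈ V := by
      refine Finset.mem_filter.2 ⟨Finset.mem_powerset.2 hCsub, ?_, ?_⟩
      · rw [hB, div_mul_eq_mul_div, le_div_iff₀ ha]
        linarith
      · apply Nat.le_floor
        have h1 : (E \ tun F C).card + (tun F C).card ≤
            (E ∪ (((I.biUnion fun i => F i.2) * E) \ E)).card := by
          rw [← Finset.card_union_of_disjoint Finset.sdiff_disjoint]
          apply Finset.card_le_card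
          exact Finset.union_subset (Finset.sdiff_subset.trans Finset.subset_union_left)
            (hsub C hCsub)
        have h2 : ((E \ tun F C).card : ℝ) + (tun F C).card ≤
            (E ∪ (((I.biUnion fun i => F i.2) * E) \ E)).card := by exact_mod_cast h1
        linarith
    simp only [Set.mem_iUnion, Set.mem_iInter, Set.mem_preimage]
    refine ⟨mk C (fun g _ => cv (g • x)), Finset.mem_biUnion.2 ⟨C, hCV, Finset.mem_image.2
      ⟨_, Finset.mem_pi.2 fun g _ => hcv𝒰 _, rfl⟩⟩, ?_⟩
    intro g hg
    simp only [mk]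
    split_ifs with h
    · exact hcv _
    · have hgU : g ∈ tun F C := by
        by_contra h'
        exact h (Finset.mem_sdiff.2 ⟨hg, h'⟩)
      obtain ⟨p, hp, h, hh, he, hW⟩ := hw C g hgU
      rw [hW]
      apply (hleb _).2
      have := (hC p hp).2.2 h hh
      rw [← he, mul_smul, Metric.mem_ball, dist_comm]
      exact this
  have hnum : coverNum 𝒰 E ≤ Λ.card := Nat.sInf_le ⟨Λ, rfl, hΛ𝒰, hΛcov⟩
  have hΛcard : Λ.card ≤ V.card * 𝒰.card ^ k := by
    refine Finset.card_biUnion_le.trans ?_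
    rw [← smul_eq_mul]
    refine Finset.sum_le_card_nsmul _ _ _ fun C hC => ?_
    refine Finset.card_image_le.trans ?_
    rw [Finset.card_pi, Finset.prod_const]
    exact Nat.pow_le_pow_right hne (Finset.mem_filter.1 hC).2.2
  have hVcard : (V.card : ℝ) ≤ Real.exp (s * B + δ * E.card) := by
    refine (count_le (E ×ˢ I) (fun p => ((F p.2.2).card : ℝ)) s B hs V ?_).trans ?_
    · intro C hC
      obtain ⟨h1, h2, _⟩ := Finset.mem_filter.1 hC
      exact ⟨Finset.mem_powerset.1 h1, h2⟩
    · apply Real.exp_le_exp.2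
      rw [Finset.sum_product]
      simp only [Finset.sum_const, nsmul_eq_mul]
      have := mul_le_mul_of_nonneg_left hIs (Nat.cast_nonneg (α := ℝ) E.card)
      linarith
  have hL : 0 ≤ Real.log (𝒰.card : ℝ) := Real.log_natCast_nonneg _
  rcases Nat.eq_zero_or_pos (coverNum 𝒰 E) with h0 | h0
  · rw [h0]
    simp only [Nat.cast_zero, Real.log_zero]
    have : 0 ≤ s * (1 + η) / a := by positivity
    have : 0 ≤ (η + θ) * Real.log (𝒰.card : ℝ) := by positivity
    positivity
  have hfin : (coverNum 𝒰 E : ℝ) ≤ Real.exp (s * B + δ * E.card) * (𝒰.card : ℝ) ^ k := by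
    calc (coverNum 𝒰 E : ℝ) ≤ (V.card : ℝ) * (𝒰.card : ℝ) ^ k := by
          exact_mod_cast hnum.trans hΛcard
      _ ≤ _ := mul_le_mul_of_nonneg_right hVcard (by positivity)
  have h𝒰0 : (0 : ℝ) < 𝒰.card := by exact_mod_cast hne
  have hlog := Real.log_le_log (by exact_mod_cast h0) hfin
  rw [Real.log_mul (Real.exp_pos _).ne' (by positivity), Real.log_exp, Real.log_pow] at hlog
  have hkle : (k : ℝ) ≤ (η + θ) * E.card := Nat.floor_le (by positivity)
  have := mul_le_mul_of_nonneg_right hkle hL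
  have e : s * B = s * (1 + η) / a * E.card := by rw [hB]; ring
  rw [e] at hlog
  linarith

lemma coverTopEnt_le [Group G] [MetricSpace X] [CompactSpace X] [Nonempty X] [MulAction G X]
    (F : ℕ → Finset G) (hFol : IsFolnerSeq F) (hTemp : IsTemperedSeq F)
    (hpos : ∀ᶠ n in atTop, 0 < (F n).card) (s : ℝ) (hs : 0 ≤ s)
    (hcov : ∀ (ε : ℝ), 0 < ε → ∀ (N : ℕ) (δ : ℝ), 0 < δ → ∃ I : Finset (X × ℕ),
      (∀ p ∈ I, N ≤ p.2) ∧
      (∀ x : X, ∃ p ∈ I, x ∈ bowenBall (F p.2) p.1 ε) ∧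
      ∑ p ∈ I, Real.exp (-s * ((F p.2).card : ℝ)) ≤ δ)
    (𝒰 : Finset (Set X)) (h𝒰 : IsFinOpenCover 𝒰) : coverTopEnt F 𝒰 ≤ s := by
  have hne : 0 < 𝒰.card := by
    obtain ⟨x⟩ := ‹Nonempty X›
    have : x ∈ ⋃₀ (𝒰 : Set (Set X)) := by rw [h𝒰.2]; trivial
    obtain ⟨W, hW, _⟩ := this
    exact Finset.card_pos.2 ⟨W, hW⟩
  obtain ⟨ε, hε, hleb⟩ := lebesgue_number_lemma_of_metric_sUnion (s := (Set.univ : Set X))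
    isCompact_univ (c := (𝒰 : Set (Set X))) (fun t ht => h𝒰.1 t ht) (by rw [h𝒰.2])
  have hleb' : ∀ x : X, ∃ W, W ∈ 𝒰 ∧ Metric.ball x ε ⊆ W := fun x => by
    obtain ⟨W, hW, h⟩ := hleb x trivial
    exact ⟨W, hW, h⟩
  choose leb hleb using hleb'
  set L := Real.log (𝒰.card : ℝ) with hLdef
  have hL : 0 ≤ L := Real.log_natCast_nonneg _
  have hb : ∀ t : ℝ, 0 < t → t < 1 →
      coverTopEnt F 𝒰 ≤ s * (1 + t) / (1 - t) + t + (t + t) * L := by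
    intro t ht ht1
    obtain ⟨θ, hθ, hgood⟩ := good_all F hFol hTemp (1 - t) (by linarith) (by linarith) hpos ε s
      (hcov ε hε) t ht
    obtain ⟨I, hIs, hI⟩ := hgood t ht
    have hgood' : ∀ (x : X) (R : Finset G), ∃ C : Finset (G × (X × ℕ)),
      (∀ p ∈ C, p.1 ∈ R ∧ p.2 ∈ I ∧ p.1 • x ∈ bowenBall (F p.2.2) p.2.1 ε) ∧
      (1 - t) * ∑ p ∈ C, ((F p.2.2).card : ℝ) ≤ ((tun F C).card : ℝ) ∧
      (1 - t) * R.card ≤ ((tun F C).card : ℝ) := by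
      intro x R
      obtain ⟨C, h1, h2, h3⟩ := hI x R
      refine ⟨C, h1, h2, le_trans ?_ h3⟩
      exact mul_le_mul_of_nonneg_right (by linarith) (Nat.cast_nonneg _)
    refine Filter.limsup_le_of_le ?_ ?_
    · refine Filter.IsCoboundedUnder.of_frequently_ge (a := 0) (Frequently.of_forall fun n => ?_)
      exact div_nonneg (Real.log_natCast_nonneg _) (Nat.cast_nonneg _)
    · filter_upwards [folner_ev F hFol (I.biUnion fun i => F i.2) t ht, hpos] with n hn hn0
      rw [div_le_iff₀ (by exact_mod_cast hn0)]
      exact log_coverNum_le F 𝒰 h𝒰 hne ε s (1 - t) t t t hs (by linarith) leb hleb I hIs (F n) hn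
        (fun x => hgood' x (F n)) ht.le ht.le (by linarith)
  have hlim : Tendsto (fun t : ℝ => s * (1 + t) / (1 - t) + t + (t + t) * L) (𝓝[>] 0) (𝓝 s) := by
    have hc : ContinuousAt (fun t : ℝ => s * (1 + t) / (1 - t) + t + (t + t) * L) 0 := by
      have : (1 : ℝ) - 0 ≠ 0 := by norm_num
      fun_prop (disch := exact this)
    have := hc.tendsto
    simp only [add_zero, sub_zero, mul_one, div_one, zero_mul] at this
    exact this.mono_left nhdsWithin_le_nhds
  refine ge_of_tendsto hlim ?_
  have : Set.Ioo (0 : ℝ) 1 ∈ 𝓝[>] (0 : ℝ) := Ioo_mem_nhdsGT one_pos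
  filter_upwards [this] with t ht
  exact hb t ht.1 ht.2

lemma isOpen_bowenBall [Group G] [MetricSpace X] [MulAction G X] [ContinuousConstSMul G X]
    (F : Finset G) (x : X) (ε : ℝ) : IsOpen (bowenBall F x ε) := by
  have : bowenBall F x ε = ⋂ g ∈ F, {y : X | dist (g • x) (g • y) < ε} := by
    ext y; simp [bowenBall]
  rw [this]
  refine isOpen_biInter_finset fun g _ => ?_
  exact isOpen_lt (by fun_prop) continuous_const

lemma exists_cover [Group G] [MetricSpace X] [CompactSpace X] [MulAction G X]
    [ContinuousConstSMul G X] (F : ℕ → Finset G) (s : ℝ)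
    (h : ballMtot F (Set.univ : Set X) s = 0) (ε : ℝ) (hε : 0 < ε) (N : ℕ) (δ : ℝ) (hδ : 0 < δ) :
    ∃ I : Finset (X × ℕ), (∀ p ∈ I, N ≤ p.2) ∧
      (∀ x : X, ∃ p ∈ I, x ∈ bowenBall (F p.2) p.1 ε) ∧
      ∑ p ∈ I, Real.exp (-(max s 0) * ((F p.2).card : ℝ)) ≤ δ := by
  have h1 : ballM F (Set.univ : Set X) N ε s < ENNReal.ofReal δ := by
    have : ballM F (Set.univ : Set X) N ε s ≤ ballMtot F (Set.univ : Set X) s :=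
      (le_iSup (fun N => ballM F (Set.univ : Set X) N ε s) N).trans
        (le_iSup₂ (f := fun (ε : ℝ) (_ : 0 < ε) => ballMN F (Set.univ : Set X) ε s) ε hε)
    rw [h] at this
    exact this.trans_lt (ENNReal.ofReal_pos.2 hδ)
  simp only [ballM, iInf_lt_iff] at h1
  obtain ⟨J, _, hJN, hJc, hJs⟩ := h1
  have hc : (Set.univ : Set X) ⊆ ⋃ p : J, bowenBall (F (p : X × ℕ).2) (p : X × ℕ).1 ε := by
    rw [← Set.biUnion_eq_iUnion J (fun p _ => bowenBall (F p.2) p.1 ε)]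
    exact hJc
  obtain ⟨T, hT⟩ := isCompact_univ.elim_finite_subcover _ (fun p => isOpen_bowenBall _ _ _) hc
  refine ⟨T.image Subtype.val, ?_, ?_, ?_⟩
  · intro p hp
    obtain ⟨q, _, rfl⟩ := Finset.mem_image.1 hp
    exact hJN _ q.2
  · intro x
    have := hT (Set.mem_univ x)
    simp only [Set.mem_iUnion] at this
    obtain ⟨q, hq, hx⟩ := this
    exact ⟨q, Finset.mem_image_of_mem _ hq, hx⟩
  · rw [Finset.sum_image (fun _ _ _ _ h => Subtype.ext h)]
    have h2 : ENNReal.ofReal (∑ p ∈ T, Real.exp (-s * ((F (p : X × ℕ).2).card : ℝ))) ≤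
        ENNReal.ofReal δ := by
      rw [ENNReal.ofReal_sum_of_nonneg fun _ _ => (Real.exp_pos _).le]
      exact (ENNReal.sum_le_tsum T).trans hJs.le
    refine le_trans (Finset.sum_le_sum fun p _ => ?_) ((ENNReal.ofReal_le_ofReal_iff hδ.le).1 h2)
    apply Real.exp_le_exp.2
    exact mul_le_mul_of_nonneg_right (neg_le_neg (le_max_left _ _)) (Nat.cast_nonneg _)

lemma growth_pos (F : ℕ → Finset G) (h : GrowthCond F) : ∀ᶠ n in atTop, 0 < (F n).card := by
  filter_upwards [h.eventually_gt_atTop 0] with n hn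
  rcases Nat.eq_zero_or_pos (F n).card with h0 | h0
  · rw [h0] at hn; simp at hn
  · exact h0

lemma coverTopEnt_empty [Group G] [MetricSpace X] [IsEmpty X] [MulAction G X]
    (F : ℕ → Finset G) (𝒰 : Finset (Set X)) : coverTopEnt F 𝒰 = 0 := by
  have : ∀ E : Finset G, coverNum 𝒰 E = 0 := by
    intro E
    refine Nat.le_zero.1 (Nat.sInf_le ⟨∅, rfl, by simp, ?_⟩)
    exact Subsingleton.elim _ _
  simp [coverTopEnt, this]

end Helpers

/-- For a countable discrete amenable group `G` acting continuously on a
compact metric space `X` and a tempered Følner sequence `{F_n}` with `lim_n |F_n|/log n = ∞`,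
`h_top(X,G) ≤ h^B_top(X,{F_n})`. -/
theorem topEnt_le_bowenEnt
    [Group G] [Countable G] [MetricSpace X] [CompactSpace X]
    [MulAction G X] [ContinuousConstSMul G X]
    (F : ℕ → Finset G) (hFol : IsFolnerSeq F) (hTemp : IsTemperedSeq F)
    (hGrow : GrowthCond F) :
    topEnt (G := G) X F ≤ bowenEnt F (Set.univ : Set X) := by
  refine iSup₂_le fun 𝒰 h𝒰 => ?_
  rcases isEmpty_or_nonempty X with hX | hX
  · rw [coverTopEnt_empty]; simp
  refine le_iInf₂ fun s hs => ?_
  have h1 : coverTopEnt F 𝒰 ≤ max s 0 :=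
    coverTopEnt_le F hFol hTemp (growth_pos F hGrow) (max s 0) (le_max_right _ _)
      (fun ε hε N δ hδ => exists_cover F s hs ε hε N δ hδ) 𝒰 h𝒰
  calc ENNReal.ofReal (coverTopEnt F 𝒰) ≤ ENNReal.ofReal (max s 0) := ENNReal.ofReal_le_ofReal h1
    _ = ENNReal.ofReal s := by simp
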